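/- Let X be a nonempty closed subset of ℝⁿ, H a properly constrained hypothesis on X, and Φ : X → ℝᵐ a constraint for H. Then every element of the dual e-class E_H^∨ = {x ↦ 1 − λ·Φ(x) : λ ∈ Λ_Φ}, where Λ_Φ = {λ ∈ ℝᵐ : sup_{x∈X} λ·Φ(x) ≤ 1}, is a maximal e-variable for H. -/

import Mathlib

open MeasureTheory Set ENNReal

noncomputable section

/-- The (topological) support of a Borel measure: the set of points all of whose open
neighbourhoods have positive measure. -/
def msupport {α : Type*} [TopologicalSpace α] [MeasurableSpace α]
    (P : Measure α) : Set α :=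
  {x | ∀ U : Set α, IsOpen U → x ∈ U → 0 < P U}

variable {α : Type*} [TopologicalSpace α] [MeasurableSpace α] {X : Set α} {m : ℕ}

/-- A hypothesis on `X`: a nonempty set of Borel probability measures (on `X`,
identified with the Borel probability measures supported in `X`). -/
def IsHypothesis (H : Set (Measure X)) : Prop :=
  H.Nonempty ∧ ∀ P ∈ H, IsProbabilityMeasure P

/-- An e-variable with respect to `H`: a Borel measurable nonnegative function whose
expectation is at most one under every `P ∈ H`. -/
def IsEVar (H : Set (Measure X)) (E : X → ℝ) : Prop :=
  Measurable E ∧ (∀ x, 0 ≤ E x) ∧ ∀ P ∈ H, ∫⁻ x, ENNReal.ofReal (E x) ∂P ≤ 1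

/-- `f` majorises `g` if `f(x) ≥ g(x)` for every `x ∈ X`. -/
def Majorises (f g : X → ℝ) : Prop := ∀ x, g x ≤ f x

/-- A maximal e-variable: an e-variable with no strict majoriser among e-variables. -/
def IsMaximalEVar (H : Set (Measure X)) (E : X → ℝ) : Prop :=
  IsEVar H E ∧ ¬ ∃ E', IsEVar H E' ∧ Majorises E' E ∧ E' ≠ E

/-- A majorising e-class: an e-class such that every e-variable is majorised by
one of its elements. -/
def IsMajorisingClass (H : Set (Measure X)) (C : Set (X → ℝ)) : Prop :=
  (∀ E ∈ C, IsEVar H E) ∧ ∀ E, IsEVar H E → ∃ E' ∈ C, Majorises E' E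

/-- The optimal e-class: a majorising e-class contained in every majorising e-class. -/
def IsOptimalClass (H : Set (Measure X)) (C : Set (X → ℝ)) : Prop :=
  IsMajorisingClass H C ∧ ∀ C', IsMajorisingClass H C' → C ⊆ C'

/-- `P ∈ P_Φ`: the expectation of the ℓ¹-norm of `Φ` under `P` is finite. -/
def MemPPhi (P : Measure X) (Φ : X → Fin m → ℝ) : Prop :=
  ∫⁻ x, ENNReal.ofReal (∑ i, |Φ x i|) ∂P < ⊤

/-- `Φ` is a constraint for `H`: `Φ` is continuous and `H` is exactly the set of Borel
probability measures `P ∈ P_Φ` with `⟨P, Φ⟩ = 0`. -/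
def IsConstraint (H : Set (Measure X)) (Φ : X → Fin m → ℝ) : Prop :=
  Continuous Φ ∧
    H = {P : Measure X | IsProbabilityMeasure P ∧ MemPPhi P Φ ∧ ∫ x, Φ x ∂P = 0}

/-- A proper constraint: a constraint such that `0` lies in the relative interior
of the convex hull of the image of `Φ`. -/
def IsProperConstraint (H : Set (Measure X)) (Φ : X → Fin m → ℝ) : Prop :=
  IsConstraint H Φ ∧
    (0 : Fin m → ℝ) ∈ intrinsicInterior ℝ (convexHull ℝ (Set.range Φ))

/-- A minimal constraint: a constraint such that `0` lies in the interior
of the convex hull of the image of `Φ`. -/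
def IsMinimalConstraint (H : Set (Measure X)) (Φ : X → Fin m → ℝ) : Prop :=
  IsConstraint H Φ ∧
    (0 : Fin m → ℝ) ∈ interior (convexHull ℝ (Set.range Φ))

/-- A finitely constrained hypothesis: one admitting a constraint. -/
def FinitelyConstrained (H : Set (Measure X)) : Prop :=
  ∃ (m : ℕ) (Φ : X → Fin m → ℝ), IsConstraint H Φ

/-- A properly constrained hypothesis: one admitting a proper constraint. -/
def ProperlyConstrained (H : Set (Measure X)) : Prop :=
  ∃ (m : ℕ) (Φ : X → Fin m → ℝ), IsProperConstraint H Φ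

/-- `Λ_{Φ|S} = {λ ∈ ℝᵐ : sup_{x ∈ S} λ·Φ(x) ≤ 1}`. -/
def LambdaSet (Φ : X → Fin m → ℝ) (S : Set X) : Set (Fin m → ℝ) :=
  {l | ∀ x ∈ S, ∑ i, l i * Φ x i ≤ 1}

/-- The dual e-class `E_H^∨ = {1 - λ·Φ : λ ∈ Λ_Φ}`. -/
def dualClass (Φ : X → Fin m → ℝ) : Set (X → ℝ) :=
  {E | ∃ l ∈ LambdaSet Φ Set.univ, E = fun x => 1 - ∑ i, l i * Φ x i}

/-- A matching set for `H`: a closed set that is exactly the support of some `P ∈ H`. -/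
def IsMatchingSet (H : Set (Measure X)) (S : Set X) : Prop :=
  IsClosed S ∧ ∃ P ∈ H, msupport P = S

end

/-!
An element `E` of the dual e-class has expectation exactly `1` under every `P ∈ H`, so an
e-variable that majorises `E` agrees with `E` almost everywhere under every `P ∈ H`. This is
equality at a point `x` as soon as some `P ∈ H` has an atom at `x`. A proper constraint `Ψ`
provides such a `P`: as `0` is in the relative interior of the convex hull of the range of `Ψ`,
the segment from `Ψ x` to `0` can be prolonged to a point `y` of the hull, which is the mean of
`Ψ` under some probability measure `Q`, and a mixture of `δ_x` and `Q` then has mean `0`.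
-/

lemma exists_mem_openSegment_of_mem_intrinsicInterior {E : Type*} [AddCommGroup E] [Module ℝ E]
    [TopologicalSpace E] [IsTopologicalAddGroup E] [ContinuousSMul ℝ E] {s : Set E} {v z : E}
    (hz : z ∈ intrinsicInterior ℝ s) (hv : v ∈ affineSpan ℝ s) :
    ∃ y ∈ s, z ∈ openSegment ℝ v y := by
  obtain ⟨z', hz', rfl⟩ := mem_intrinsicInterior.1 hz
  let line : ℝ → affineSpan ℝ s := fun t =>
    ⟨AffineMap.lineMap (z' : E) v t, AffineMap.lineMap_mem t z'.2 hv⟩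
  have line_zero : line 0 = z' := Subtype.ext (AffineMap.lineMap_apply_zero _ _)
  have line_continuous : Continuous line := AffineMap.lineMap_continuous.subtype_mk _
  have s_mem_nhds : (↑) ⁻¹' s ∈ nhds (line (-0)) := by
    simpa only [neg_zero, line_zero] using mem_interior_iff_mem_nhds.1 hz'
  have eventually_mem : ∀ᶠ t in nhds 0, (line (-t) : E) ∈ s :=
    (line_continuous.comp continuous_neg).continuousAt.eventually_mem s_mem_nhds
  obtain ⟨t, hts, ht⟩ : ∃ t, (line (-t) : E) ∈ s ∧ 0 < t :=
    ((eventually_mem.filter_mono nhdsWithin_le_nhds).and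
      (eventually_mem_nhdsWithin (s := Ioi 0))).exists
  refine ⟨line (-t), hts, t / (1 + t), 1 / (1 + t), by positivity, by positivity,
    by field_simp; ring, ?_⟩
  simp only [line, AffineMap.lineMap_apply_module]
  match_scalars <;> field_simp <;> ring

section HasMean

open scoped NNReal

variable {Ω E : Type*} [MeasurableSpace Ω] [NormedAddCommGroup E] [NormedSpace ℝ E]
  {f : Ω → E} {P Q : Measure Ω} {y z : E}

/-- `P` is a probability measure under which `f` is integrable with expectation `z`. Integrability
is part of the notion because the Bochner integral of a non-integrable function is `0`. -/
structure HasMean (f : Ω → E) (P : Measure Ω) (z : E) : Prop where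
  isProbabilityMeasure : IsProbabilityMeasure P
  integrable : Integrable f P
  integral_eq : ∫ ω, f ω ∂P = z

namespace HasMean

lemma dirac [CompleteSpace E] (hf : StronglyMeasurable f) (ω : Ω) :
    HasMean f (Measure.dirac ω) (f ω) where
  isProbabilityMeasure := inferInstance
  integrable := integrable_dirac' hf enorm_lt_top
  integral_eq := integral_dirac' f ω hf

lemma convex_combination {a b : ℝ≥0} (hP : HasMean f P y) (hQ : HasMean f Q z)
    (hab : a + b = 1) : HasMean f (a • P + b • Q) (a • y + b • z) := by
  have := hP.isProbabilityMeasure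
  have := hQ.isProbabilityMeasure
  have haP : Integrable f (a • P) := hP.integrable.smul_measure_nnreal
  have hbQ : Integrable f (b • Q) := hQ.integrable.smul_measure_nnreal
  refine ⟨⟨?_⟩, haP.add_measure hbQ, ?_⟩
  · simp [← ENNReal.coe_add, hab]
  · rw [integral_add_measure haP hbQ, integral_smul_nnreal_measure, integral_smul_nnreal_measure,
      hP.integral_eq, hQ.integral_eq]

lemma const_sub_sum_mul {ι : Type*} [Fintype ι] {f : Ω → ι → ℝ} {z : ι → ℝ} (hP : HasMean f P z)
    (c : ℝ) (l : ι → ℝ) :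
    HasMean (fun ω => c - ∑ i, l i * f ω i) P (c - ∑ i, l i * z i) := by
  have := hP.isProbabilityMeasure
  have integrable_mul (i : ι) : Integrable (fun ω => l i * f ω i) P :=
    (hP.integrable.eval i).const_mul _
  have integrable_sum : Integrable (fun ω => ∑ i, l i * f ω i) P :=
    integrable_finsetSum _ fun i _ => integrable_mul i
  refine ⟨this, (integrable_const c).sub integrable_sum, ?_⟩
  rw [integral_sub (integrable_const c) integrable_sum,
    integral_finsetSum _ fun i _ => integrable_mul i]
  simp [integral_const_mul, ← eval_integral hP.integrable.eval, hP.integral_eq]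

lemma lintegral_ofReal {g : Ω → ℝ} {c : ℝ} (hP : HasMean g P c) (hg : 0 ≤ g) :
    ∫⁻ ω, ENNReal.ofReal (g ω) ∂P = ENNReal.ofReal c := by
  rw [← ofReal_integral_eq_lintegral_ofReal hP.integrable (.of_forall hg), hP.integral_eq]

end HasMean

lemma exists_hasMean_of_mem_convexHull_range [CompleteSpace E] (hf : StronglyMeasurable f)
    (hz : z ∈ convexHull ℝ (range f)) : ∃ P, HasMean f P z := by
  suffices convexHull ℝ (range f) ⊆ {z | ∃ P, HasMean f P z} from this hz
  refine convexHull_min ?_ ?_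
  · rintro _ ⟨ω, rfl⟩
    exact ⟨_, .dirac hf ω⟩
  · rintro x ⟨P, hP⟩ y ⟨Q, hQ⟩ a b ha hb hab
    lift a to ℝ≥0 using ha
    lift b to ℝ≥0 using hb
    exact ⟨_, hP.convex_combination hQ (mod_cast hab)⟩

lemma exists_hasMean_dirac_absolutelyContinuous [CompleteSpace E] (hf : StronglyMeasurable f)
    (hz : z ∈ intrinsicInterior ℝ (convexHull ℝ (range f))) (ω : Ω) :
    ∃ P, HasMean f P z ∧ Measure.dirac ω ≪ P := by
  have hω : f ω ∈ affineSpan ℝ (convexHull ℝ (range f)) :=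
    subset_affineSpan ℝ _ (subset_convexHull ℝ _ (mem_range_self ω))
  obtain ⟨y, hy, a, b, ha, hb, hab, rfl⟩ := exists_mem_openSegment_of_mem_intrinsicInterior hz hω
  obtain ⟨Q, hQ⟩ := exists_hasMean_of_mem_convexHull_range hf hy
  lift a to ℝ≥0 using ha.le
  lift b to ℝ≥0 using hb.le
  have dirac_ac : Measure.dirac ω ≪ a • Measure.dirac ω + b • Q :=
    (Measure.absolutelyContinuous_smul (by exact_mod_cast ha.ne')).add_right _
  exact ⟨_, (HasMean.dirac hf ω).convex_combination hQ (mod_cast hab), dirac_ac⟩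

end HasMean

section EVariables

variable {α : Type*} [MeasurableSpace α] {X : Set α} {m : ℕ} {H : Set (Measure X)}
  {Φ : X → Fin m → ℝ} {E : X → ℝ}

lemma isMaximalEVar_of_lintegral_eq_one (hE : Measurable E) (hE0 : ∀ x, 0 ≤ E x)
    (hE1 : ∀ P ∈ H, ∫⁻ x, ENNReal.ofReal (E x) ∂P = 1)
    (hH : ∀ x, ∃ P ∈ H, Measure.dirac x ≪ P) : IsMaximalEVar H E := by
  refine ⟨⟨hE, hE0, fun P hP => (hE1 P hP).le⟩, ?_⟩
  rintro ⟨E', ⟨hE', hE'0, hE'1⟩, hmaj, hne⟩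
  refine hne (funext fun x => ?_)
  obtain ⟨P, hP, hxP⟩ := hH x
  have ae_eq : (fun x => ENNReal.ofReal (E x)) =ᵐ[P] fun x => ENNReal.ofReal (E' x) := by
    refine ae_eq_of_ae_le_of_lintegral_le
      (.of_forall fun x => ENNReal.ofReal_le_ofReal (hmaj x)) ?_ hE'.ennreal_ofReal.aemeasurable ?_
    · simp [hE1 P hP]
    · exact (hE'1 P hP).trans (hE1 P hP).ge
  have eq_at : ENNReal.ofReal (E x) = ENNReal.ofReal (E' x) :=
    (ae_dirac_iff (measurableSet_eq_fun hE.ennreal_ofReal hE'.ennreal_ofReal)).1 (hxP.ae_eq ae_eq)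
  exact ((ENNReal.ofReal_eq_ofReal_iff (hE0 x) (hE'0 x)).1 eq_at).symm

lemma memPPhi_iff_integrable {P : Measure X} (hΦ : AEStronglyMeasurable Φ P) :
    MemPPhi P Φ ↔ Integrable Φ P := by
  have hΦi (i : Fin m) : AEStronglyMeasurable (Φ · i) P :=
    (continuous_apply i).comp_aestronglyMeasurable hΦ
  simp only [MemPPhi, ENNReal.ofReal_sum_of_nonneg fun _ _ => abs_nonneg _,
    ← Real.enorm_eq_ofReal_abs]
  rw [lintegral_finsetSum' _ fun i _ => (hΦi i).enorm, ENNReal.sum_lt_top, integrable_pi_iff]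
  exact ⟨fun h i => ⟨hΦi i, h i (Finset.mem_univ i)⟩, fun h i _ => (h i).hasFiniteIntegral⟩

variable [TopologicalSpace α] [OpensMeasurableSpace α]

lemma IsConstraint.mem_iff_hasMean (hΦ : IsConstraint H Φ) {P : Measure X} :
    P ∈ H ↔ HasMean Φ P 0 := by
  obtain ⟨hc, rfl⟩ := hΦ
  have memPPhi_iff := memPPhi_iff_integrable (P := P) hc.aestronglyMeasurable
  exact ⟨fun ⟨hP, hPΦ, h0⟩ => ⟨hP, memPPhi_iff.1 hPΦ, h0⟩,
    fun h => ⟨h.isProbabilityMeasure, memPPhi_iff.2 h.integrable, h.integral_eq⟩⟩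

lemma ProperlyConstrained.exists_dirac_absolutelyContinuous (hH : ProperlyConstrained H) (x : X) :
    ∃ P ∈ H, Measure.dirac x ≪ P := by
  obtain ⟨k, Ψ, hΨ, h0⟩ := hH
  obtain ⟨P, hP, hxP⟩ := exists_hasMean_dirac_absolutelyContinuous hΨ.1.stronglyMeasurable h0 x
  exact ⟨P, hΨ.mem_iff_hasMean.2 hP, hxP⟩

theorem statement11_general (hH : ProperlyConstrained H) (hΦ : IsConstraint H Φ)
    (hE : E ∈ dualClass Φ) : IsMaximalEVar H E := by
  obtain ⟨l, hl, rfl⟩ := hE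
  have hΦc : Continuous Φ := hΦ.1
  have dual_continuous : Continuous fun x => 1 - ∑ i, l i * Φ x i := by fun_prop
  have dual_nonneg (x : X) : 0 ≤ 1 - ∑ i, l i * Φ x i := sub_nonneg.2 (hl x (mem_univ x))
  refine isMaximalEVar_of_lintegral_eq_one dual_continuous.measurable dual_nonneg (fun P hP => ?_)
    hH.exists_dirac_absolutelyContinuous
  have hmean := (hΦ.mem_iff_hasMean.1 hP).const_sub_sum_mul 1 l
  simpa using hmean.lintegral_ofReal dual_nonneg

end EVariables

/-- every element of the dual e-class of a properly constrained hypothesis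
is a maximal e-variable. -/
theorem statement11 {n m : ℕ} {X : Set (EuclideanSpace ℝ (Fin n))}
    (hXc : IsClosed X) (hXne : X.Nonempty)
    (H : Set (Measure X)) (hHne : H.Nonempty) (hpc : ProperlyConstrained H)
    (Φ : X → Fin m → ℝ) (hΦ : IsConstraint H Φ) :
    ∀ E ∈ dualClass Φ, IsMaximalEVar H E :=
  fun _ hE => statement11_general hpc hΦ hE
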